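/- arXiv:2406.04945 — 5 statements merged into one kernel-verified Lean document; each statement's English description precedes it below -/
import Mathlib

section
/- Let B be a ring, t an element of the center of B, X a projective left B-module, M a left B-module, and i a natural number. Then the additive map t^i·Hom_B(X, M) → Hom_B(X, t^i M ⧸ t^{i+1} M) sending a map of the form x ↦ t^i • f(x) to the composite of it with the quotient map t^i M → t^i M ⧸ t^{i+1} M is surjective, and its kernel is exactly t^{i+1}·Hom_B(X, M). Hence it induces an isomorphism of abelian groups t^i·Hom_B(X,M) ⧸ t^{i+1}·Hom_B(X,M) ≅ Hom_B(X, t^i M ⧸ t^{i+1} M). -/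
/-- Scalar multiplication by a central element `t` of a ring `B`, as a `B`-linear
endomorphism of a left `B`-module `M`. Its range is the submodule `t M`. -/
def centralSmul {B : Type*} [Ring B] (t : B) (ht : t ∈ Subring.center B)
    (M : Type*) [AddCommGroup M] [Module B M] : M →ₗ[B] M where
  toFun m := t • m
  map_add' x y := smul_add t x y
  map_smul' b m := by
    simp only [RingHom.id_apply, smul_smul]
    rw [Subring.mem_center_iff.mp ht b]

/-- The submodule `tⁱ M` of all elements of the form `tⁱ • m`. -/
def tPowSub {B : Type*} [Ring B] (t : B) (ht : t ∈ Subring.center B) (i : ℕ)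
    (M : Type*) [AddCommGroup M] [Module B M] : Submodule B M :=
  LinearMap.range (centralSmul (t ^ i) (pow_mem ht i) M)

/-- The additive subgroup `tⁱ·Hom_B(X, M)` of `Hom_B(X, M)` consisting of the `B`-linear
maps of the form `x ↦ tⁱ • f x` for some `B`-linear `f : X → M`. -/
def tPowHom {B : Type*} [Ring B] (t : B) (i : ℕ)
    (X M : Type*) [AddCommGroup X] [Module B X] [AddCommGroup M] [Module B M] :
    AddSubgroup (X →ₗ[B] M) where
  carrier := {h | ∃ f : X →ₗ[B] M, ∀ x : X, h x = t ^ i • f x}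
  zero_mem' := ⟨0, fun x => by simp⟩
  add_mem' := by
    rintro a b ⟨f, hf⟩ ⟨g, hg⟩
    exact ⟨f + g, fun x => by simp [hf x, hg x, smul_add]⟩
  neg_mem' := by
    rintro a ⟨f, hf⟩
    exact ⟨-f, fun x => by simp [hf x]⟩

/-- The map `tⁱ·Hom_B(X, M) → Hom_B(X, tⁱM ⧸ tⁱ⁺¹M)` sending a map of the form
`x ↦ tⁱ • f x` to its corestriction to `tⁱM` composed with the quotient map
`tⁱM → tⁱM ⧸ tⁱ⁺¹M`. -/
def tPowHomToGr {B : Type*} [Ring B] (t : B) (ht : t ∈ Subring.center B) (i : ℕ)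
    (X M : Type*) [AddCommGroup X] [Module B X] [AddCommGroup M] [Module B M]
    (h : ↥(tPowHom t i X M)) :
    X →ₗ[B] (↥(tPowSub t ht i M) ⧸
      ((tPowSub t ht (i + 1) M).comap (tPowSub t ht i M).subtype)) :=
  (((tPowSub t ht (i + 1) M).comap (tPowSub t ht i M).subtype).mkQ).comp
    (LinearMap.codRestrict (tPowSub t ht i M) h.1
      (fun x => LinearMap.mem_range.mpr ⟨h.2.choose x, (h.2.choose_spec x).symm⟩))

/-- The additive map `tⁱ·Hom_B(X, M) → Hom_B(X, tⁱM ⧸ tⁱ⁺¹M)` given by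
corestriction followed by the quotient map is surjective with kernel exactly
`tⁱ⁺¹·Hom_B(X, M)`; hence it induces an isomorphism of abelian groups
`tⁱ·Hom_B(X,M) ⧸ tⁱ⁺¹·Hom_B(X,M) ≅ Hom_B(X, tⁱM ⧸ tⁱ⁺¹M)`. -/
theorem tPowHomToGr_surjective_ker
    {B : Type*} [Ring B] (t : B) (ht : t ∈ Subring.center B)
    (X M : Type*) [AddCommGroup X] [Module B X] [Module.Projective B X]
    [AddCommGroup M] [Module B M] (i : ℕ) :
    (∀ a b : ↥(tPowHom t i X M),
        tPowHomToGr t ht i X M (a + b) = tPowHomToGr t ht i X M a + tPowHomToGr t ht i X M b) ∧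
    Function.Surjective (tPowHomToGr t ht i X M) ∧
    (∀ h : ↥(tPowHom t i X M),
        tPowHomToGr t ht i X M h = 0 ↔ (h : X →ₗ[B] M) ∈ tPowHom t (i + 1) X M) ∧
    Nonempty ((↥(tPowHom t i X M) ⧸ ((tPowHom t (i + 1) X M).addSubgroupOf (tPowHom t i X M)))
      ≃+ (X →ₗ[B] (↥(tPowSub t ht i M) ⧸
          ((tPowSub t ht (i + 1) M).comap (tPowSub t ht i M).subtype)))) := by
  have hadd : ∀ a b : ↥(tPowHom t i X M),
      tPowHomToGr t ht i X M (a + b) =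
        tPowHomToGr t ht i X M a + tPowHomToGr t ht i X M b := by
    intro a b
    rfl
  have hsurj : Function.Surjective (tPowHomToGr t ht i X M) := by
    intro g
    obtain ⟨f, hf⟩ := Module.projective_lifting_property
      ((((tPowSub t ht (i + 1) M).comap (tPowSub t ht i M).subtype).mkQ).comp
        (LinearMap.rangeRestrict (centralSmul (t ^ i) (pow_mem ht i) M))) g
      ((Submodule.mkQ_surjective _).comp (LinearMap.surjective_rangeRestrict _))
    refine ⟨⟨(centralSmul (t ^ i) (pow_mem ht i) M).comp f, f, fun x => rfl⟩, ?_⟩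
    rw [← hf]
    rfl
  have hker : ∀ h : ↥(tPowHom t i X M),
      tPowHomToGr t ht i X M h = 0 ↔ (h : X →ₗ[B] M) ∈ tPowHom t (i + 1) X M := by
    intro h
    have key : tPowHomToGr t ht i X M h = 0 ↔
        ∀ x, (h : X →ₗ[B] M) x ∈ tPowSub t ht (i + 1) M := by
      rw [LinearMap.ext_iff]
      refine forall_congr' fun x => ?_
      exact Submodule.Quotient.mk_eq_zero
        ((tPowSub t ht (i + 1) M).comap (tPowSub t ht i M).subtype)
    rw [key]
    constructor
    · intro hx
      obtain ⟨f, hf⟩ := Module.projective_lifting_property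
        (LinearMap.rangeRestrict (centralSmul (t ^ (i + 1)) (pow_mem ht (i + 1)) M))
        (LinearMap.codRestrict (tPowSub t ht (i + 1) M) h.1 hx)
        (LinearMap.surjective_rangeRestrict _)
      exact ⟨f, fun x => (congrArg Subtype.val (LinearMap.congr_fun hf x)).symm⟩
    · rintro ⟨f, hf⟩ x
      exact ⟨f x, (hf x).symm⟩
  refine ⟨hadd, hsurj, hker, ?_⟩
  let φ := AddMonoidHom.mk' (tPowHomToGr t ht i X M) hadd
  have hφ : (tPowHom t (i + 1) X M).addSubgroupOf (tPowHom t i X M) = φ.ker := by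
    ext h
    rw [AddSubgroup.mem_addSubgroupOf, AddMonoidHom.mem_ker]
    exact (hker h).symm
  exact ⟨(QuotientAddGroup.quotientAddEquivOfEq hφ).trans
    (QuotientAddGroup.quotientKerEquivOfSurjective φ hsurj)⟩
end

section
/- Let B be a ring, t an element of the center of B, and n a natural number with t^{n+1} = 0 in B. Let X be a projective left B-module and let M be a cochain complex of left B-modules (indexed by ℤ). For each i, let t^i M denote the subcomplex whose degree-j term is t^i M^j, and let Gr^i_t(M) = t^i M ⧸ t^{i+1} M. Let Hom_B(X, M) denote the cochain complex whose degree-j term is Hom_B(X, M^j), with differentials given by postcomposition with those of M, filtered by the subcomplexes t^i·Hom_B(X,M) whose degree-j terms consist of the maps of the form x ↦ t^i • f(x) for f ∈ Hom_B(X, M^j). If the complex Gr^i_t(M) is acyclic for every i = 0, …, n, then the complex t^i·Hom_B(X,M) ⧸ t^{i+1}·Hom_B(X,M) is acyclic for every i = 0, …, n. -/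
/-- Let `B` be a ring, `t` a central element with `t^(n+1) = 0`, `X` a
projective left `B`-module and `M` a cochain complex of left `B`-modules (given by modules
`M j` and differentials `d j : M j → M (j+1)` squaring to zero).  If the associated graded
complex `Grⁱ_t(M) = tⁱM ⧸ tⁱ⁺¹M` is acyclic for every `i = 0, …, n` (elementwise: every
`x ∈ tⁱ M^(j+1)` with `d x ∈ tⁱ⁺¹ M^(j+2)` is, modulo `tⁱ⁺¹`, the differential of an element
of `tⁱ M^j`), then for the Hom-complex `Hom_B(X, M)` — with degree-`j` term `Hom_B(X, M^j)`,
differential given by postcomposition, and filtration by the subcomplexes `tⁱ·Hom_B(X,M)`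
of maps of the form `x ↦ tⁱ • f x` — the complex `tⁱ·Hom_B(X,M) ⧸ tⁱ⁺¹·Hom_B(X,M)` is
acyclic for every `i = 0, …, n`. -/
theorem hom_gr_acyclic_of_gr_acyclic
    {B : Type*} [Ring B] (t : B) (ht : t ∈ Subring.center B) (n : ℕ)
    (htn : t ^ (n + 1) = 0)
    (X : Type*) [AddCommGroup X] [Module B X] [Module.Projective B X]
    (M : ℤ → Type*) [∀ j, AddCommGroup (M j)] [∀ j, Module B (M j)]
    (d : ∀ j : ℤ, M j →ₗ[B] M (j + 1))
    (hdd : ∀ (j : ℤ) (x : M j), d (j + 1) (d j x) = 0)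
    (hGr : ∀ i ≤ n, ∀ (j : ℤ) (x : M (j + 1)),
      (∃ m : M (j + 1), x = t ^ i • m) →
      (∃ m : M (j + 1 + 1), d (j + 1) x = t ^ (i + 1) • m) →
      ∃ y : M j, (∃ m : M j, y = t ^ i • m) ∧
        (∃ m : M (j + 1), d j y - x = t ^ (i + 1) • m)) :
    ∀ i ≤ n, ∀ (j : ℤ) (g : X →ₗ[B] M (j + 1)),
      (∃ f : X →ₗ[B] M (j + 1), ∀ x : X, g x = t ^ i • f x) →
      (∃ f : X →ₗ[B] M (j + 1 + 1), ∀ x : X, d (j + 1) (g x) = t ^ (i + 1) • f x) →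
      ∃ h : X →ₗ[B] M j, (∃ f : X →ₗ[B] M j, ∀ x : X, h x = t ^ i • f x) ∧
        (∃ f : X →ₗ[B] M (j + 1), ∀ x : X, d j (h x) - g x = t ^ (i + 1) • f x) := by
  have hc : ∀ (k : ℕ) (b : B), t ^ k * b = b * t ^ k := fun k b =>
    (Subring.mem_center_iff.mp (pow_mem ht k) b).symm
  intro i hi j g ⟨f₁, hf₁⟩ ⟨f₂, hf₂⟩
  let φ : (M j × M (j + 1)) →ₗ[B] M (j + 1) :=
    { toFun := fun p => t ^ i • d j p.1 - t ^ (i + 1) • p.2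
      map_add' := fun p q => by
        simp only [Prod.fst_add, Prod.snd_add, map_add, smul_add]
        abel
      map_smul' := fun b p => by
        simp only [Prod.smul_fst, Prod.smul_snd, map_smul, smul_smul, smul_sub, hc,
          RingHom.id_apply] }
  have hg : ∀ x, g x ∈ LinearMap.range φ := by
    intro x
    obtain ⟨y, ⟨m, hm⟩, m', hm'⟩ := hGr i hi j (g x) ⟨f₁ x, hf₁ x⟩ ⟨f₂ x, hf₂ x⟩
    refine ⟨(m, m'), ?_⟩
    change t ^ i • d j m - t ^ (i + 1) • m' = g x
    rw [← hm', hm, map_smul]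
    abel
  obtain ⟨l, hl⟩ := Module.projective_lifting_property φ.rangeRestrict
    (g.codRestrict _ hg) φ.surjective_rangeRestrict
  have hl' : ∀ x, t ^ i • d j (l x).1 - t ^ (i + 1) • (l x).2 = g x := fun x =>
    congrArg Subtype.val (LinearMap.congr_fun hl x)
  let h₀ : X →ₗ[B] M j := (LinearMap.fst B _ _).comp l
  let h : X →ₗ[B] M j :=
    { toFun := fun x => t ^ i • h₀ x
      map_add' := fun p q => by simp only [map_add, smul_add]
      map_smul' := fun b p => by simp only [map_smul, smul_smul, hc, RingHom.id_apply] }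
  refine ⟨h, ⟨h₀, fun x => rfl⟩, (LinearMap.snd B _ _).comp l, fun x => ?_⟩
  change d j (t ^ i • (l x).1) - g x = t ^ (i + 1) • (l x).2
  rw [← hl' x, map_smul]
  abel
end

section
/- Let R be a commutative ring, t ∈ R, X a flat R-module, M an R-module, and i a natural number. Then there is an isomorphism of R-modules t^i(M ⊗_R X) ⧸ t^{i+1}(M ⊗_R X) ≅ (t^i M ⧸ t^{i+1} M) ⊗_R X, natural in M and X, sending the class of t^i • (m ⊗ x) to [t^i • m] ⊗ x. -/
open TensorProduct

universe u

/-- The submodule `cN` of an `R`-module `N`, i.e. the range of scalar multiplication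
by `c : R`. -/
def smulSub (R : Type u) [CommRing R] (c : R)
    (N : Type u) [AddCommGroup N] [Module R N] : Submodule R N :=
  LinearMap.range (LinearMap.lsmul R N c)

/-- The `i`-th associated graded piece `Grⁱ_t(N) = tⁱN ⧸ tⁱ⁺¹N` of the `t`-adic
filtration of an `R`-module `N`. -/
def grPiece (R : Type u) [CommRing R] (t : R) (i : ℕ)
    (N : Type u) [AddCommGroup N] [Module R N] :=
  ↥(smulSub R (t ^ i) N) ⧸
    ((smulSub R (t ^ (i + 1)) N).comap (smulSub R (t ^ i) N).subtype)

noncomputable instance (R : Type u) [CommRing R] (t : R) (i : ℕ)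
    (N : Type u) [AddCommGroup N] [Module R N] : AddCommGroup (grPiece R t i N) :=
  inferInstanceAs (AddCommGroup (↥(smulSub R (t ^ i) N) ⧸
    ((smulSub R (t ^ (i + 1)) N).comap (smulSub R (t ^ i) N).subtype)))

noncomputable instance (R : Type u) [CommRing R] (t : R) (i : ℕ)
    (N : Type u) [AddCommGroup N] [Module R N] : Module R (grPiece R t i N) :=
  inferInstanceAs (Module R (↥(smulSub R (t ^ i) N) ⧸
    ((smulSub R (t ^ (i + 1)) N).comap (smulSub R (t ^ i) N).subtype)))

/-- The surjection `N → Grⁱ_t(N)`, `n ↦ [tⁱ n]`. -/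
noncomputable def grProj (R : Type u) [CommRing R] (t : R) (i : ℕ)
    (N : Type u) [AddCommGroup N] [Module R N] : N →ₗ[R] grPiece R t i N :=
  (Submodule.mkQ ((smulSub R (t ^ (i + 1)) N).comap (smulSub R (t ^ i) N).subtype)).comp
    (LinearMap.rangeRestrict (LinearMap.lsmul R N (t ^ i)))

theorem grProj_surj (R : Type u) [CommRing R] (t : R) (i : ℕ)
    (N : Type u) [AddCommGroup N] [Module R N] : Function.Surjective (grProj R t i N) :=
  (Submodule.mkQ_surjective _).comp (LinearMap.surjective_rangeRestrict _)

theorem grProj_eq_zero (R : Type u) [CommRing R] (t : R) (i : ℕ)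
    (N : Type u) [AddCommGroup N] [Module R N] (n : N) :
    grProj R t i N n = 0 ↔ ∃ n' : N, t ^ (i + 1) • n' = t ^ i • n :=
  Submodule.Quotient.mk_eq_zero _

theorem grProj_ker (R : Type u) [CommRing R] (t : R) (i : ℕ)
    (M : Type u) [AddCommGroup M] [Module R M]
    (X : Type u) [AddCommGroup X] [Module R X] [Module.Flat R X] :
    LinearMap.ker (grProj R t i (M ⊗[R] X)) =
      LinearMap.ker ((grProj R t i M).rTensor X) := by
  apply le_antisymm
  · intro z hz
    obtain ⟨w, hw⟩ := (grProj_eq_zero R t i _ z).1 hz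
    have hk : (LinearMap.lsmul R M (t ^ i)).rTensor X (z - t • w) = 0 := by
      have h1 : (LinearMap.lsmul R M (t ^ i)).rTensor X
          = LinearMap.lsmul R (M ⊗[R] X) (t ^ i) := by
        ext m x
        simp [TensorProduct.smul_tmul']
      rw [h1, LinearMap.lsmul_apply, smul_sub, ← hw, smul_smul, pow_succ, sub_self]
    have hex := Module.Flat.rTensor_exact X
      (LinearMap.exact_subtype_ker_map (LinearMap.lsmul R M (t ^ i)))
    obtain ⟨y, hy⟩ := (hex _).1 hk
    have hz' : z = t • w + (LinearMap.ker (LinearMap.lsmul R M (t ^ i))).subtype.rTensor X y := by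
      rw [hy]; abel
    have h2 : (grProj R t i M).comp (LinearMap.ker (LinearMap.lsmul R M (t ^ i))).subtype = 0 := by
      ext k
      refine (grProj_eq_zero R t i _ _).2 ⟨0, ?_⟩
      have := k.2
      rw [LinearMap.mem_ker, LinearMap.lsmul_apply] at this
      simp [this]
    have h3 : t • grProj R t i M = 0 := by
      ext m
      rw [LinearMap.smul_apply, ← map_smul]
      exact (grProj_eq_zero R t i _ _).2 ⟨m, by rw [smul_smul, pow_succ]⟩
    rw [LinearMap.mem_ker, hz', map_add, map_smul, ← LinearMap.smul_apply,
      ← LinearMap.rTensor_smul, h3, ← LinearMap.comp_apply, ← LinearMap.rTensor_comp, h2]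
    simp
  · intro z hz
    have hex := rTensor_exact X (LinearMap.exact_subtype_ker_map (grProj R t i M))
      (grProj_surj R t i M)
    obtain ⟨y, rfl⟩ := (hex _).1 hz
    have h : (grProj R t i (M ⊗[R] X)).comp
        ((LinearMap.ker (grProj R t i M)).subtype.rTensor X) = 0 := by
      ext k x
      obtain ⟨m', hm⟩ := (grProj_eq_zero R t i _ _).1 k.2
      refine (grProj_eq_zero R t i _ _).2 ⟨m' ⊗ₜ x, ?_⟩
      simp [TensorProduct.smul_tmul', hm]
    exact LinearMap.congr_fun h y

/-- For a commutative ring `R`, `t ∈ R`, a flat `R`-module `X`, an `R`-module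
`M` and `i : ℕ`, there is an isomorphism of `R`-modules
`tⁱ(M ⊗_R X) ⧸ tⁱ⁺¹(M ⊗_R X) ≅ (tⁱM ⧸ tⁱ⁺¹M) ⊗_R X`, natural in `M` and `X`, sending the
class of `tⁱ • (m ⊗ x)` to `[tⁱ • m] ⊗ x` (naturality is encoded by giving the isomorphism
simultaneously for all `M` and `X`, determined by the stated formula). -/
theorem gr_tensor_equiv
    (R : Type u) [CommRing R] (t : R) (i : ℕ) :
    ∃ e : ∀ (M : Type u) [AddCommGroup M] [Module R M]
        (X : Type u) [AddCommGroup X] [Module R X] [Module.Flat R X],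
        grPiece R t i (M ⊗[R] X) ≃ₗ[R] ((grPiece R t i M) ⊗[R] X),
      ∀ (M : Type u) [AddCommGroup M] [Module R M]
        (X : Type u) [AddCommGroup X] [Module R X] [Module.Flat R X]
        (m : M) (x : X),
        e M X (Submodule.Quotient.mk
            ⟨t ^ i • (m ⊗ₜ[R] x), LinearMap.mem_range.mpr ⟨m ⊗ₜ[R] x, rfl⟩⟩) =
          (Submodule.Quotient.mk
            ⟨t ^ i • m, LinearMap.mem_range.mpr ⟨m, rfl⟩⟩ : grPiece R t i M) ⊗ₜ[R] x := by
  refine ⟨fun M _ _ X _ _ _ =>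
    ((grProj R t i (M ⊗[R] X)).quotKerEquivOfSurjective (grProj_surj R t i _)).symm ≪≫ₗ
    Submodule.quotEquivOfEq _ _ (grProj_ker R t i M X) ≪≫ₗ
    ((grProj R t i M).rTensor X).quotKerEquivOfSurjective
      (LinearMap.rTensor_surjective X (grProj_surj R t i M)), ?_⟩
  intro M _ _ X _ _ _ m x
  have h : ((grProj R t i (M ⊗[R] X)).quotKerEquivOfSurjective (grProj_surj R t i _)).symm
      (grProj R t i (M ⊗[R] X) (m ⊗ₜ[R] x)) = Submodule.Quotient.mk (m ⊗ₜ[R] x) := by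
    rw [LinearEquiv.symm_apply_eq]; rfl
  change ((grProj R t i M).rTensor X).quotKerEquivOfSurjective
    (LinearMap.rTensor_surjective X (grProj_surj R t i M))
    (Submodule.quotEquivOfEq _ _ (grProj_ker R t i M X)
      (((grProj R t i (M ⊗[R] X)).quotKerEquivOfSurjective (grProj_surj R t i _)).symm
        (grProj R t i (M ⊗[R] X) (m ⊗ₜ[R] x)))) = _
  rw [h]
  rfl
end

section
/- Let R be a ring, t an element of the center of R, and n a natural number with t^{n+1} = 0 in R. Let f : M → N be a morphism of cochain complexes of left R-modules. For each i, f restricts to a morphism t^i M → t^i N and hence induces morphisms of complexes Gr^i_t(f) : t^i M ⧸ t^{i+1} M → t^i N ⧸ t^{i+1} N. If Gr^i_t(f) is a quasi-isomorphism for every i = 0, …, n, then f is a quasi-isomorphism. -/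
/-- Let `R` be a ring, `t` central with `t^(n+1) = 0`, and `f : M → N` a
morphism of cochain complexes of left `R`-modules.  If the induced morphism
`Grⁱ_t(f) : tⁱM ⧸ tⁱ⁺¹M → tⁱN ⧸ tⁱ⁺¹N` on associated graded complexes is a
quasi-isomorphism for every `i = 0, …, n` (stated elementwise: surjectivity and
injectivity on cohomology of the graded pieces), then `f` is a quasi-isomorphism
(stated elementwise: surjectivity and injectivity on cohomology). -/
theorem quasiIso_of_gr_quasiIso
    {R : Type*} [Ring R] (t : R) (ht : t ∈ Subring.center R) (n : ℕ)
    (htn : t ^ (n + 1) = 0)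
    (M N : ℤ → Type*) [∀ j, AddCommGroup (M j)] [∀ j, Module R (M j)]
    [∀ j, AddCommGroup (N j)] [∀ j, Module R (N j)]
    (dM : ∀ j : ℤ, M j →ₗ[R] M (j + 1)) (hdM : ∀ (j : ℤ) (x : M j), dM (j + 1) (dM j x) = 0)
    (dN : ∀ j : ℤ, N j →ₗ[R] N (j + 1)) (hdN : ∀ (j : ℤ) (x : N j), dN (j + 1) (dN j x) = 0)
    (f : ∀ j : ℤ, M j →ₗ[R] N j)
    (hf : ∀ (j : ℤ) (x : M j), f (j + 1) (dM j x) = dN j (f j x))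
    -- `Grⁱ(f)` is surjective on cohomology for all `i ≤ n`:
    (hGrSurj : ∀ i ≤ n, ∀ (j : ℤ) (x : N (j + 1)),
      (∃ m, x = t ^ i • m) → (∃ m, dN (j + 1) x = t ^ (i + 1) • m) →
      ∃ (z : M (j + 1)) (y : N j),
        (∃ m, z = t ^ i • m) ∧ (∃ m, dM (j + 1) z = t ^ (i + 1) • m) ∧
        (∃ m, y = t ^ i • m) ∧ (∃ m, f (j + 1) z - x - dN j y = t ^ (i + 1) • m))
    -- `Grⁱ(f)` is injective on cohomology for all `i ≤ n`:
    (hGrInj : ∀ i ≤ n, ∀ (j : ℤ) (z : M (j + 1)),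
      (∃ m, z = t ^ i • m) → (∃ m, dM (j + 1) z = t ^ (i + 1) • m) →
      (∃ y : N j, (∃ m, y = t ^ i • m) ∧ (∃ m, f (j + 1) z - dN j y = t ^ (i + 1) • m)) →
      ∃ w : M j, (∃ m, w = t ^ i • m) ∧ (∃ m, z - dM j w = t ^ (i + 1) • m)) :
    -- `f` is surjective on cohomology:
    (∀ (j : ℤ) (x : N (j + 1)), dN (j + 1) x = 0 →
      ∃ (z : M (j + 1)) (y : N j), dM (j + 1) z = 0 ∧ f (j + 1) z = x + dN j y) ∧
    -- `f` is injective on cohomology: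
    (∀ (j : ℤ) (z : M (j + 1)), dM (j + 1) z = 0 →
      (∃ y : N j, f (j + 1) z = dN j y) → ∃ w : M j, z = dM j w) := by
  -- acyclicity of the mapping cone, by descending induction along the filtration
  have key : ∀ k i : ℕ, i + k = n + 1 → ∀ (j : ℤ) (z : M (j + 1 + 1)) (y : N (j + 1)),
      (∃ m, z = t ^ i • m) → (∃ m, y = t ^ i • m) → dM (j + 1 + 1) z = 0 →
      f (j + 1 + 1) z = dN (j + 1) y →
      ∃ (w : M (j + 1)) (v : N j), z = dM (j + 1) w ∧ y = f (j + 1) w + dN j v := by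
    intro k
    induction k with
    | zero =>
      rintro i hi j z y ⟨a, rfl⟩ ⟨b, rfl⟩ _ _
      obtain rfl : i = n + 1 := by omega
      exact ⟨0, 0, by simp [htn], by simp [htn]⟩
    | succ k ih =>
      rintro i hi j z y hz ⟨b, hb⟩ hdz hfz
      obtain ⟨w, ⟨c, hc⟩, e, he⟩ := hGrInj i (by omega) (j + 1) z hz
        ⟨0, by simp [hdz]⟩ ⟨y, ⟨b, hb⟩, 0, by simp [hfz]⟩
      obtain ⟨z', v, _, ⟨q, hq⟩, _, r, hr⟩ := hGrSurj i (by omega) j (y - f (j + 1) w)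
        ⟨b - f (j + 1) c, by rw [hb, hc, map_smul, smul_sub]⟩
        ⟨f (j + 1 + 1) e, by rw [map_sub, ← hf, ← hfz, ← map_sub, he, map_smul]⟩
      obtain ⟨w', v', h1, h2⟩ := ih (i + 1) (by omega) j (z - dM (j + 1) (w + z'))
        (y - f (j + 1) (w + z') + dN j v)
        ⟨e - q, by rw [smul_sub, ← he, ← hq, map_add]; abel⟩
        ⟨-r, by rw [smul_neg, ← hr, map_add]; abel⟩
        (by rw [map_sub, hdM, hdz, sub_zero])
        (by rw [map_sub, map_add (dN (j + 1)), map_sub, hdN, hf, hfz, add_zero])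
      refine ⟨w + z' + w', v' - v, ?_, ?_⟩
      · rw [map_add, ← h1]; abel
      · have h3 : y = f (j + 1) (w + z') + (y - f (j + 1) (w + z') + dN j v) - dN j v := by abel
        rw [h3, h2, map_add (f (j + 1)) (w + z') w', map_sub]; abel
  have key0 := key (n + 1) 0 (by omega)
  constructor
  · intro j x hx
    obtain ⟨w, v, h1, h2⟩ := key0 j 0 x ⟨0, by simp⟩ ⟨x, by simp⟩ (by simp) (by simp [hx])
    exact ⟨w, -v, h1.symm, by rw [h2, map_neg]; abel⟩
  · intro j
    obtain ⟨k, rfl⟩ : ∃ k : ℤ, j = k + 1 := ⟨j - 1, by omega⟩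
    rintro z hz ⟨y, hy⟩
    obtain ⟨w, v, h1, _⟩ := key0 k z y ⟨z, by simp⟩ ⟨y, by simp⟩ hz hy
    exact ⟨w, h1⟩
end

section
/- Let k be a field and k[ε] = k[ε]/(ε²) the ring of dual numbers. Let K be the cochain complex of k[ε]-modules with K^j = k[ε] for every j ∈ ℤ and with every differential given by multiplication by ε. Let M be any cochain complex of k[ε]-modules such that both the subcomplex εM (whose degree-j term is ε M^j) and the quotient complex M ⧸ εM are acyclic. Then every morphism of cochain complexes K → M is null-homotopic via a k[ε]-linear chain homotopy. -/
open DualNumber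

/-- Let `k` be a field and `k[ε]` the dual numbers.  Let `K` be the complex
with `K^j = k[ε]` in every degree and every differential equal to multiplication by `ε`.
If `M` is a cochain complex of `k[ε]`-modules such that the subcomplex `εM` and the
quotient complex `M ⧸ εM` are acyclic (stated elementwise), then every morphism of
complexes `K → M` (a family `φ j` with `φ (j+1) (ε * x) = d j (φ j x)`) is null-homotopic
via a `k[ε]`-linear chain homotopy `h` (with `h j : K^(j+1) → M^j`). -/
theorem dualNumber_complex_maps_nullHomotopic
    (k : Type*) [Field k]
    (M : ℤ → Type*) [∀ j, AddCommGroup (M j)] [∀ j, Module (DualNumber k) (M j)]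
    (d : ∀ j : ℤ, M j →ₗ[DualNumber k] M (j + 1))
    (hdd : ∀ (j : ℤ) (x : M j), d (j + 1) (d j x) = 0)
    -- the subcomplex `εM` is acyclic:
    (hsub : ∀ (j : ℤ) (x : M (j + 1)), (∃ m, x = (ε : DualNumber k) • m) →
      d (j + 1) x = 0 →
      ∃ y : M j, (∃ m, y = (ε : DualNumber k) • m) ∧ d j y = x)
    -- the quotient complex `M ⧸ εM` is acyclic:
    (hquot : ∀ (j : ℤ) (x : M (j + 1)),
      (∃ m, d (j + 1) x = (ε : DualNumber k) • m) →
      ∃ y : M j, ∃ m, d j y - x = (ε : DualNumber k) • m)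
    -- a morphism of complexes `K → M`:
    (φ : ∀ j : ℤ, DualNumber k →ₗ[DualNumber k] M j)
    (hφ : ∀ (j : ℤ) (x : DualNumber k), φ (j + 1) ((ε : DualNumber k) * x) = d j (φ j x)) :
    -- it is null-homotopic via a `k[ε]`-linear homotopy:
    ∃ h : ∀ j : ℤ, DualNumber k →ₗ[DualNumber k] M j,
      ∀ (j : ℤ) (x : DualNumber k),
        φ (j + 1) x = d j (h j x) + h (j + 1) ((ε : DualNumber k) * x) := by
  have hee : ∀ (j : ℤ) (m : M j), (ε : DualNumber k) • (ε : DualNumber k) • m = 0 := by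
    intro j m
    rw [smul_smul, DualNumber.eps_mul_eps, zero_smul]
  have hφ1 : ∀ (j : ℤ), (ε : DualNumber k) • φ (j + 1) 1 = d j (φ j 1) := by
    intro j
    rw [← hφ j 1, ← map_smul, smul_eq_mul]
  have h1 : ∀ j : ℤ, ∃ y : M j, ∃ m, d j y - φ (j + 1) 1 = (ε : DualNumber k) • m :=
    fun j => hquot j _ ⟨_, (hφ1 (j + 1)).symm⟩
  choose y z hyz using h1
  -- correct `y j` by an element of `ε M j`
  have h2 : ∀ j : ℤ, ∃ c : M j, (∃ m, c = (ε : DualNumber k) • m) ∧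
      d j c = (ε : DualNumber k) • (-z j - y (j + 1)) := by
    intro j
    refine hsub j _ ⟨_, rfl⟩ ?_
    have e1 : d (j + 1) ((ε : DualNumber k) • z j) = -((ε : DualNumber k) • φ (j + 1 + 1) 1) := by
      rw [← hyz j, map_sub, hdd, hφ1, zero_sub]
    have e2 : (ε : DualNumber k) • d (j + 1) (y (j + 1)) = (ε : DualNumber k) • φ (j + 1 + 1) 1 := by
      have := congrArg (fun t => (ε : DualNumber k) • t) (hyz (j + 1))
      simp only [hee, smul_sub] at this
      exact sub_eq_zero.mp this
    rw [smul_sub, smul_neg, map_sub, map_neg, e1, map_smul, e2, neg_neg, sub_self]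
  choose c hc hdc using h2
  refine ⟨fun j => LinearMap.toSpanSingleton (DualNumber k) (M j) (y j + c j), ?_⟩
  intro j x
  have hc0 : (ε : DualNumber k) • c (j + 1) = 0 := by
    obtain ⟨m, hm⟩ := hc (j + 1)
    rw [hm, hee]
  have key : φ (j + 1) 1 = d j (y j + c j) + (ε : DualNumber k) • (y (j + 1) + c (j + 1)) := by
    rw [map_add, hdc, smul_add, hc0, smul_sub, smul_neg, ← hyz j]
    abel
  have hx : φ (j + 1) x = x • φ (j + 1) 1 := by
    rw [← map_smul, smul_eq_mul, mul_one]
  rw [hx, key, LinearMap.toSpanSingleton_apply, LinearMap.toSpanSingleton_apply, map_smul,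
    smul_add, smul_smul, mul_comm x]
end
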